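/- Let α_p > 0, α_z ≥ 0 and σ_μ ≥ 0 satisfy σ_μ·(1/(1 + α_z/α_p)) > 1/√(2π). Then for every α_x ≥ 0, setting α = α_x + α_p + α_z and α_ψ = α²/(α_x + α_p²·σ_μ²), for every Z ∈ ℝ, x_c ∈ ℝ and m ∈ ℝ the equation Φ(√α_ψ·(((α_z + α_p)/α)·θ − (α_z/α)·Z − (α_p/α)·m − x_c/√α)) = θ has exactly one real solution θ*, and θ* ∈ (0,1). -/

import Mathlib

/-- The standard normal cumulative distribution function. -/
noncomputable def stdNormalCDF (x : ℝ) : ℝ :=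
  ∫ t in Set.Iic x, (Real.sqrt (2 * Real.pi))⁻¹ * Real.exp (-t ^ 2 / 2)

/-!
As a function of `θ`, the argument of `Φ` is affine with slope
`(αz + αp) / √(αx + αp² σμ²)`, which is largest at `αx = 0`, where it equals
`(1 + αz / αp) / σμ < √(2π)`. Since the Gaussian density is at most `1 / √(2π)`, the equilibrium
map is a contraction of `ℝ` for every `αx`, and its range lies in `(0, 1)`.
-/

section CDF

open MeasureTheory ProbabilityTheory Set
open scoped NNReal

variable {μ : Measure ℝ} [IsProbabilityMeasure μ]

lemma cdf_mem_Ioo_zero_one [μ.IsOpenPosMeasure] (x : ℝ) : cdf μ x ∈ Ioo (0 : ℝ) 1 := by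
  have measureReal_Iic_pos : 0 < μ.real (Iic x) :=
    ENNReal.toReal_pos (μ.measure_pos_of_nonempty_interior (by simp)).ne' (measure_ne_top _ _)
  have measureReal_Ioi_pos : 0 < μ.real (Ioi x) :=
    ENNReal.toReal_pos (isOpen_Ioi.measure_pos μ nonempty_Ioi).ne' (measure_ne_top _ _)
  rw [← compl_Iic, probReal_compl_eq_one_sub measurableSet_Iic] at measureReal_Ioi_pos
  rw [cdf_eq_real]
  exact ⟨measureReal_Iic_pos, sub_pos.mp measureReal_Ioi_pos⟩

lemma lipschitzWith_cdf_of_le_smul_volume {K : ℝ≥0} (hμ : μ ≤ K • volume) :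
    LipschitzWith K (cdf μ) := by
  refine .of_le_add_mul K fun x y ↦ ?_
  have measureReal_Ioc_le : μ.real (Ioc y x) ≤ K * dist x y :=
    calc μ.real (Ioc y x)
      _ ≤ (K • volume : Measure ℝ).real (Ioc y x) :=
        ENNReal.toReal_mono measure_Ioc_lt_top.ne (hμ _)
      _ = K * max (x - y) 0 := by rw [measureReal_nnreal_smul_apply, Real.volume_real_Ioc]
      _ ≤ K * dist x y := by
        gcongr
        exact max_le (le_abs_self _) dist_nonneg
  have Iic_subset : Iic x ⊆ Iic y ∪ Ioc y x := fun t ht ↦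
    (le_or_gt t y).imp id fun hty ↦ ⟨hty, ht⟩
  rw [cdf_eq_real, cdf_eq_real]
  calc μ.real (Iic x)
    _ ≤ μ.real (Iic y ∪ Ioc y x) := measureReal_mono Iic_subset
    _ ≤ μ.real (Iic y) + μ.real (Ioc y x) := measureReal_union_le _ _
    _ ≤ μ.real (Iic y) + K * dist x y := by gcongr

lemma existsUnique_cdf_comp_eq_self {K L : ℝ≥0} {g : ℝ → ℝ} (hμ : μ ≤ K • volume)
    (hg : LipschitzWith L g) (hKL : K * L < 1) : ∃! θ, cdf μ (g θ) = θ := by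
  have hcontr : ContractingWith (K * L) (cdf μ ∘ g) :=
    ⟨hKL, (lipschitzWith_cdf_of_le_smul_volume hμ).comp hg⟩
  exact ⟨_, hcontr.fixedPoint_isFixedPt, fun _ hθ ↦ hcontr.fixedPoint_unique hθ⟩

end CDF

section Gaussian

open MeasureTheory ProbabilityTheory
open scoped NNReal

lemma gaussianPDFReal_le_inv_sqrt (m : ℝ) (v : ℝ≥0) (x : ℝ) :
    gaussianPDFReal m v x ≤ (√(2 * Real.pi * v))⁻¹ := by
  refine mul_le_of_le_one_right (by positivity) (Real.exp_le_one_iff.mpr ?_)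
  exact div_nonpos_of_nonpos_of_nonneg (neg_nonpos.mpr (sq_nonneg _)) (by positivity)

lemma gaussianReal_le_smul_volume (m : ℝ) {v : ℝ≥0} (hv : v ≠ 0) :
    gaussianReal m v ≤ (NNReal.sqrt (2 * NNReal.pi * v))⁻¹ • volume := by
  have gaussianPDF_le (x : ℝ) :
      gaussianPDF m v x ≤ ((NNReal.sqrt (2 * NNReal.pi * v))⁻¹ : ℝ≥0) := by
    rw [gaussianPDF, ENNReal.ofReal_le_coe]
    simpa using gaussianPDFReal_le_inv_sqrt m v x
  calc gaussianReal m v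
    _ = volume.withDensity (gaussianPDF m v) := gaussianReal_of_var_ne_zero m hv
    _ ≤ volume.withDensity fun _ ↦ ((NNReal.sqrt (2 * NNReal.pi * v))⁻¹ : ℝ≥0) :=
      withDensity_mono (ae_of_all _ gaussianPDF_le)
    _ = (NNReal.sqrt (2 * NNReal.pi * v))⁻¹ • volume := withDensity_const _

lemma isOpenPosMeasure_gaussianReal (m : ℝ) {v : ℝ≥0} (hv : v ≠ 0) :
    (gaussianReal m v).IsOpenPosMeasure :=
  (gaussianReal_absolutelyContinuous' m hv).isOpenPosMeasure

lemma stdNormalCDF_eq_cdf : stdNormalCDF = cdf (gaussianReal 0 1) := by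
  ext x
  rw [cdf_eq_real, measureReal_def, gaussianReal_apply_eq_integral 0 one_ne_zero,
    ENNReal.toReal_ofReal (integral_nonneg (gaussianPDFReal_nonneg 0 1))]
  simp [stdNormalCDF, gaussianPDFReal]

lemma stdNormalCDF_mem_Ioo_zero_one (x : ℝ) : stdNormalCDF x ∈ Set.Ioo (0 : ℝ) 1 := by
  have := isOpenPosMeasure_gaussianReal 0 one_ne_zero
  rw [stdNormalCDF_eq_cdf]
  exact cdf_mem_Ioo_zero_one x

lemma existsUnique_stdNormalCDF_comp_eq_self {L : ℝ≥0} {g : ℝ → ℝ} (hg : LipschitzWith L g)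
    (hL : L < √(2 * Real.pi)) : ∃! θ, stdNormalCDF (g θ) = θ := by
  rw [stdNormalCDF_eq_cdf]
  refine existsUnique_cdf_comp_eq_self (gaussianReal_le_smul_volume 0 one_ne_zero) hg ?_
  rw [mul_one, ← NNReal.coe_lt_coe]
  push_cast
  rwa [NNReal.coe_real_pi, inv_mul_lt_one₀ (by positivity)]

end Gaussian

lemma sqrt_sq_div_mul_div_cancel {a : ℝ} (ha : 0 < a) (b d : ℝ) :
    √(a ^ 2 / d) * (b / a) = b / √d := by
  rw [Real.sqrt_div (sq_nonneg a), Real.sqrt_sq ha.le]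
  field_simp

lemma le_sqrt_add_sq {a : ℝ} (ha : 0 ≤ a) (b : ℝ) : b ≤ √(a + b ^ 2) :=
  Real.le_sqrt_of_sq_le (le_add_of_nonneg_left ha)

lemma equilibrium_slope_le {αp αz αx σμ α : ℝ} (hαp : 0 < αp) (hαz : 0 ≤ αz) (hσμ : 0 < σμ)
    (hαx : 0 ≤ αx) (hα : 0 < α) :
    √(α ^ 2 / (αx + αp ^ 2 * σμ ^ 2)) * ((αz + αp) / α) ≤ (σμ * (1 / (1 + αz / αp)))⁻¹ :=
  calc √(α ^ 2 / (αx + αp ^ 2 * σμ ^ 2)) * ((αz + αp) / α)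
    _ = (αz + αp) / √(αx + (αp * σμ) ^ 2) := by rw [sqrt_sq_div_mul_div_cancel hα, mul_pow]
    _ ≤ (αz + αp) / (αp * σμ) := by
      gcongr
      exact le_sqrt_add_sq hαx _
    _ = (σμ * (1 / (1 + αz / αp)))⁻¹ := by
      field_simp
      ring

lemma lipschitzWith_mul_add {R : Type*} [NonUnitalSeminormedRing R] (a b : R) :
    LipschitzWith ‖a‖₊ fun x ↦ a * x + b :=
  .of_dist_le_mul fun x y ↦ by
    rw [dist_add_right, dist_eq_norm, dist_eq_norm, ← mul_sub]
    exact norm_mul_le a (x - y)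

theorem stmt_7 (αp αz σμ : ℝ) (hαp : 0 < αp) (hαz : 0 ≤ αz) (hσμ : 0 ≤ σμ)
    (h : σμ * (1 / (1 + αz / αp)) > 1 / Real.sqrt (2 * Real.pi)) :
    ∀ αx : ℝ, 0 ≤ αx →
      ∀ α αψ : ℝ, α = αx + αp + αz → αψ = α ^ 2 / (αx + αp ^ 2 * σμ ^ 2) →
        ∀ Z xc m : ℝ,
          ∃ θ ∈ Set.Ioo (0 : ℝ) 1,
            stdNormalCDF (Real.sqrt αψ *
              (((αz + αp) / α) * θ - (αz / α) * Z - (αp / α) * m - xc / Real.sqrt α)) = θ ∧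
            ∀ θ' : ℝ,
              stdNormalCDF (Real.sqrt αψ *
                (((αz + αp) / α) * θ' - (αz / α) * Z - (αp / α) * m -
                  xc / Real.sqrt α)) = θ' →
              θ' = θ := by
  rintro αx hαx α αψ hα rfl Z xc m
  have hα_pos : 0 < α := by linarith
  have hσμ_pos : 0 < σμ :=
    pos_of_mul_pos_left ((by positivity : 0 < 1 / Real.sqrt (2 * Real.pi)).trans h) (by positivity)
  set scale := Real.sqrt (α ^ 2 / (αx + αp ^ 2 * σμ ^ 2))
  set slope := scale * ((αz + αp) / α) with slope_def
  have slope_nonneg : 0 ≤ slope := by positivity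
  have slope_lt : slope < Real.sqrt (2 * Real.pi) :=
    (equilibrium_slope_le hαp hαz hσμ_pos hαx hα_pos).trans_lt
      (inv_lt_of_inv_lt₀ (by positivity) (by simpa only [one_div] using h))
  have argument_lipschitz : LipschitzWith ‖slope‖₊ fun θ ↦
      scale * ((αz + αp) / α * θ - αz / α * Z - αp / α * m - xc / Real.sqrt α) := by
    convert! lipschitzWith_mul_add slope
      (-(scale * (αz / α * Z + αp / α * m + xc / Real.sqrt α))) using 2
    rw [slope_def]
    ring
  obtain ⟨θ, hθ, hθ_unique⟩ := existsUnique_stdNormalCDF_comp_eq_self argument_lipschitz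
    (by rwa [coe_nnnorm, Real.norm_of_nonneg slope_nonneg])
  exact ⟨θ, hθ ▸ stdNormalCDF_mem_Ioo_zero_one _, hθ, hθ_unique⟩
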